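/- Let (X,d) be a proper geodesic metric space with a doubling Borel probability measure μ supporting a local (1,s)-Poincaré inequality for some s ≥ 1. Let 1 < q ≤ 2 and p ≥ 2 with 1/p + 1/q = 1, and consider the Hopf–Lax semigroup Q_t f(x) = inf_{y ∈ X}[ d(x,y)^p/(p·t^{p−1}) + f(y) ]. Suppose a, ρ > 0 are such that for every bounded measurable f : X → ℝ and every t ≥ 0, (∫_X e^{(a+ρt)·Q_t f} dμ)^{1/(a+ρt)} ≤ (∫_X e^{a·f} dμ)^{1/a}. Then (X,d,μ) satisfies the q-logarithmic Sobolev inequality with the constant K₀ > 0 determined by a^{2−q}·K₀^{q−1} = ρ·(q−1). -/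

import Mathlib

open Metric Filter NNReal ENNReal Topology MeasureTheory

/-- Hopf–Lax semigroup with Lagrangian `L(u) = u^p/p`:
`Q_t f(x) = inf_y [ d(x,y)^p/(p·t^{p−1}) + f(y) ]`, and `Q_0 f = f`. -/
noncomputable def hopfLaxP {X : Type*} [MetricSpace X] (p : ℝ) (f : X → ℝ)
    (t : ℝ) (x : X) : ℝ :=
  if t = 0 then f x else ⨅ y : X, (dist x y ^ p / (p * t ^ (p - 1)) + f y)

/-- The metric subgradient `|∇⁻ f|(x₀) = limsup_{x → x₀} [f(x₀) − f(x)]₊ / d(x,x₀)`. -/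
noncomputable def metricSubgradient {X : Type*} [MetricSpace X] (f : X → ℝ) (x₀ : X) : ℝ :=
  limsup (fun x => max (f x₀ - f x) 0 / dist x x₀) (𝓝[≠] x₀)

/-- The lower local Lipschitz number
`lip f(x) = liminf_{r→0⁺} sup_{d(x,y)<r} |f(x)−f(y)|/r`. -/
noncomputable def locLip {X : Type*} [MetricSpace X] (f : X → ℝ) (x : X) : ℝ :=
  liminf (fun r => sSup ((fun y => |f x - f y| / r) '' Metric.ball x r)) (𝓝[>] (0:ℝ))

/-- A Borel measure is doubling if open balls have positive finite measure and
`μ(B(x,2r)) ≤ c·μ(B(x,r))` for some constant `c ≥ 1`. -/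
def IsDoublingMeasure {X : Type*} [MetricSpace X] [MeasurableSpace X]
    (μ : Measure X) : Prop :=
  (∀ (x : X) (r : ℝ), 0 < r → 0 < μ (Metric.ball x r) ∧ μ (Metric.ball x r) < ⊤) ∧
  ∃ c : ℝ≥0∞, 1 ≤ c ∧ ∀ (x : X) (r : ℝ), 0 < r →
    μ (Metric.ball x (2 * r)) ≤ c * μ (Metric.ball x r)

/-- `(X,d,μ)` supports a local `(1,s)`-Poincaré inequality. -/
def LocalPoincareIneq {X : Type*} [MetricSpace X] [MeasurableSpace X]
    (μ : Measure X) (s : ℝ) : Prop :=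
  ∃ Λ : ℝ, 1 ≤ Λ ∧ ∃ C : ℝ, 0 < C ∧
    ∀ f : X → ℝ, (∃ K : ℝ≥0, LipschitzWith K f) → ∀ (x : X) (r : ℝ), 0 < r →
      (⨍ y in Metric.ball x r, |f y - ⨍ z in Metric.ball x r, f z ∂μ| ∂μ) ≤
        C * r * (⨍ y in Metric.ball x (Λ * r), (locLip f y) ^ s ∂μ) ^ (1 / s)

/-- The entropy functional `Ent_μ(h) = ∫ h log h dμ − (∫ h dμ)·log(∫ h dμ)`. -/
noncomputable def entropyFn {X : Type*} [MeasurableSpace X] (μ : Measure X)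
    (h : X → ℝ) : ℝ :=
  ∫ x, h x * Real.log (h x) ∂μ - (∫ x, h x ∂μ) * Real.log (∫ x, h x ∂μ)

/-- The `q`-logarithmic Sobolev inequality with constant `K`:
`Ent_μ(|f|^q) ≤ (q−1)·(q/K)^{q−1}·∫ |∇⁻ f|^q dμ` for all Lipschitz `f`. -/
def QLogSobolev {X : Type*} [MetricSpace X] [MeasurableSpace X]
    (μ : Measure X) (q K : ℝ) : Prop :=
  ∀ f : X → ℝ, (∃ Kf : ℝ≥0, LipschitzWith Kf f) →
    entropyFn μ (fun x => |f x| ^ q) ≤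
      (q - 1) * (q / K) ^ (q - 1) * ∫ x, (metricSubgradient f x) ^ q ∂μ

section HopfLaxLemmas
variable {X : Type*} [MetricSpace X]

lemma hl_young {p q : ℝ} (h : p.HolderConjugate q) {d k t : ℝ} (hd : 0 ≤ d) (hk : 0 ≤ k)
    (ht : 0 < t) : k * d ≤ d ^ p / (p * t ^ (p - 1)) + t * (k ^ q / q) := by
  have h1 := Real.young_inequality_of_nonneg (div_nonneg hd ht.le) hk h
  have h2 := mul_le_mul_of_nonneg_left h1 ht.le
  have hp := h.pos
  have h3 : t * ((d / t) ^ p / p) = d ^ p / (p * t ^ (p - 1)) := by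
    rw [Real.div_rpow hd ht.le, Real.rpow_sub_one ht.ne']
    have : t ^ p ≠ 0 := (Real.rpow_pos_of_pos ht p).ne'
    field_simp
  rw [mul_add, h3] at h2
  have h4 : t * (d / t * k) = k * d := by field_simp
  linarith

lemma hl_cost_nonneg {p : ℝ} (hp : 0 < p) {t : ℝ} (ht : 0 < t) (x y : X) :
    0 ≤ dist x y ^ p / (p * t ^ (p - 1)) := by positivity

lemma hl_bddBelow {p : ℝ} (hp : 0 < p) {t : ℝ} (ht : 0 < t) {v : X → ℝ} {M : ℝ}
    (hv : ∀ x, |v x| ≤ M) (x : X) :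
    BddBelow (Set.range fun y => dist x y ^ p / (p * t ^ (p - 1)) + v y) := by
  refine ⟨-M, ?_⟩
  rintro _ ⟨y, rfl⟩
  have := hl_cost_nonneg hp ht x y
  have := (abs_le.1 (hv y)).1
  simp only
  linarith

lemma hl_le {p : ℝ} (hp : 0 < p) {t : ℝ} (ht : 0 < t) {v : X → ℝ} {M : ℝ}
    (hv : ∀ x, |v x| ≤ M) (x y : X) :
    hopfLaxP p v t x ≤ dist x y ^ p / (p * t ^ (p - 1)) + v y := by
  rw [hopfLaxP, if_neg ht.ne']
  exact ciInf_le (hl_bddBelow hp ht hv x) y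

lemma hl_le_self {p : ℝ} (hp : 0 < p) {t : ℝ} (ht : 0 < t) {v : X → ℝ} {M : ℝ}
    (hv : ∀ x, |v x| ≤ M) (x : X) : hopfLaxP p v t x ≤ v x := by
  have := hl_le hp ht hv x x
  simpa [Real.zero_rpow hp.ne'] using this

lemma hl_ge {p : ℝ} {t : ℝ} (ht : 0 < t) {v : X → ℝ} (x : X) {c : ℝ}
    (h : ∀ y, c ≤ dist x y ^ p / (p * t ^ (p - 1)) + v y) : c ≤ hopfLaxP p v t x := by
  have : Nonempty X := ⟨x⟩
  rw [hopfLaxP, if_neg ht.ne']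
  exact le_ciInf h

lemma hl_abs {p : ℝ} (hp : 0 < p) {t : ℝ} (ht : 0 < t) {v : X → ℝ} {M : ℝ}
    (hv : ∀ x, |v x| ≤ M) (x : X) : |hopfLaxP p v t x| ≤ M := by
  rw [abs_le]
  refine ⟨hl_ge ht x fun y => ?_, (hl_le_self hp ht hv x).trans (abs_le.1 (hv x)).2⟩
  have := hl_cost_nonneg hp ht x y
  have := (abs_le.1 (hv y)).1
  linarith

lemma hl_measurable [MeasurableSpace X] [BorelSpace X] {p : ℝ} (hp : 0 < p) {t : ℝ} (ht : 0 < t)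
    {v : X → ℝ} {M : ℝ} (hv : ∀ x, |v x| ≤ M) : Measurable (hopfLaxP p v t) := by
  have : UpperSemicontinuous (fun x => ⨅ y : X, (dist x y ^ p / (p * t ^ (p - 1)) + v y)) := by
    refine upperSemicontinuous_ciInf (fun x => hl_bddBelow hp ht hv x) fun y => ?_
    apply Continuous.upperSemicontinuous
    have : Continuous fun x : X => dist x y ^ p :=
      (continuous_id.dist continuous_const).rpow_const fun _ => Or.inr hp.le
    fun_prop
  have h2 : hopfLaxP p v t = (fun x => ⨅ y : X, (dist x y ^ p / (p * t ^ (p - 1)) + v y)) := by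
    funext x; rw [hopfLaxP, if_neg ht.ne']
  rw [h2]; exact this.measurable

lemma hl_lip {p q : ℝ} (h : p.HolderConjugate q) {t : ℝ} (ht : 0 < t) {v : X → ℝ}
    {L : ℝ≥0} (hL : LipschitzWith L v) (x : X) :
    v x - hopfLaxP p v t x ≤ t * ((L : ℝ) ^ q / q) := by
  have : v x - t * ((L : ℝ) ^ q / q) ≤ hopfLaxP p v t x := by
    refine hl_ge ht x fun y => ?_
    have h1 := hl_young h (dist_nonneg (x := x) (y := y)) L.coe_nonneg ht
    have h2 := (le_abs_self _).trans ((Real.dist_eq _ _).symm.le.trans (hL.dist_le_mul x y))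
    linarith
  linarith

lemma hl_local {p q : ℝ} (h : p.HolderConjugate q) {v : X → ℝ}
    {L : ℝ≥0} (hL : LipschitzWith L v) (x : X) {k : ℝ} (hk : 0 ≤ k)
    (hloc : ∀ᶠ y in 𝓝 x, v x - v y ≤ k * dist x y) :
    ∀ᶠ t in 𝓝[>] (0:ℝ), v x - hopfLaxP p v t x ≤ t * (k ^ q / q) := by
  obtain ⟨δ, hδ, hb⟩ := Metric.eventually_nhds_iff.1 hloc
  have hp := h.pos
  have hp1 : 0 < p - 1 := h.sub_one_pos
  have hlim : Tendsto (fun t : ℝ => p * L * t ^ (p - 1)) (𝓝 0) (𝓝 (p * L * 0 ^ (p - 1))) :=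
    ((Real.continuousAt_rpow_const 0 (p-1) (Or.inr hp1.le)).tendsto).const_mul _
  rw [Real.zero_rpow hp1.ne', mul_zero] at hlim
  have hev := (hlim.eventually (gt_mem_nhds (Real.rpow_pos_of_pos hδ (p - 1)))).filter_mono
    (nhdsWithin_le_nhds (s := Set.Ioi 0))
  filter_upwards [hev, self_mem_nhdsWithin] with t ht1 ht
  replace ht : 0 < t := ht
  have : v x - t * (k ^ q / q) ≤ hopfLaxP p v t x := by
    refine hl_ge ht x fun y => ?_
    by_cases hy : dist y x < δ
    · have h1 := hl_young h (dist_nonneg (x := x) (y := y)) hk ht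
      have h2 := hb hy
      linarith
    · push Not at hy
      rw [dist_comm] at hy
      have hd : 0 < dist x y := hδ.trans_le hy
      have h2 := (le_abs_self _).trans ((Real.dist_eq _ _).symm.le.trans (hL.dist_le_mul x y))
      have h3 : (L:ℝ) * dist x y ≤ dist x y ^ p / (p * t ^ (p - 1)) := by
        rw [le_div_iff₀ (by positivity)]
        have e : dist x y ^ p = dist x y * dist x y ^ (p - 1) := by
          rw [Real.rpow_sub_one hd.ne']; field_simp
        rw [e]
        have h4 : δ ^ (p - 1) ≤ dist x y ^ (p - 1) := Real.rpow_le_rpow hδ.le hy hp1.le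
        nlinarith
      have h5 : 0 ≤ t * (k ^ q / q) := by have := h.symm.pos; positivity
      linarith
  linarith

/-- subgradient facts -/
lemma sg_bdd {f : X → ℝ} {L : ℝ≥0} (hL : LipschitzWith L f) (x : X) (l : Filter X) :
    IsBoundedUnder (· ≤ ·) l (fun y => max (f x - f y) 0 / dist y x) := by
  refine ⟨L, ?_⟩
  simp only [eventually_map]
  refine Eventually.of_forall fun y => ?_
  have h2 := (le_abs_self _).trans ((Real.dist_eq _ _).symm.le.trans (hL.dist_le_mul x y))
  refine div_le_of_le_mul₀ dist_nonneg L.coe_nonneg ?_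
  rw [dist_comm]
  exact max_le h2 (by positivity)

lemma sg_cobdd (f : X → ℝ) (x : X) (l : Filter X) [l.NeBot] :
    IsCoboundedUnder (· ≤ ·) l (fun y => max (f x - f y) 0 / dist y x) := by
  refine IsBoundedUnder.isCoboundedUnder_le ⟨0, ?_⟩
  simp only [eventually_map]
  exact Eventually.of_forall fun y => by positivity

lemma sg_bot (f : X → ℝ) (x : X) (hb : 𝓝[≠] x = ⊥) : metricSubgradient f x = 0 := by
  rw [metricSubgradient, hb, limsup, limsSup]
  simp

lemma sg_nonneg {f : X → ℝ} {L : ℝ≥0} (hL : LipschitzWith L f) (x : X) :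
    0 ≤ metricSubgradient f x := by
  rcases eq_or_neBot (𝓝[≠] x) with hb | hb
  · rw [sg_bot f x hb]
  · exact le_limsup_of_frequently_le (Eventually.frequently (Eventually.of_forall
      fun y => by positivity)) (sg_bdd hL x _)

lemma sg_le_of {f : X → ℝ} {x : X} {k : ℝ} (hk : 0 ≤ k)
    (h : ∀ᶠ y in 𝓝 x, f x - f y ≤ k * dist x y) : metricSubgradient f x ≤ k := by
  rcases eq_or_neBot (𝓝[≠] x) with hb | hb
  · rwa [sg_bot f x hb]
  · refine limsup_le_of_le (sg_cobdd f x _) ?_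
    filter_upwards [h.filter_mono nhdsWithin_le_nhds] with y hy
    refine div_le_of_le_mul₀ dist_nonneg hk ?_
    rw [dist_comm]
    exact max_le hy (by positivity)

lemma sg_le_lip {f : X → ℝ} {L : ℝ≥0} (hL : LipschitzWith L f) (x : X) :
    metricSubgradient f x ≤ L := 
  sg_le_of L.coe_nonneg (Eventually.of_forall fun y =>
    (le_abs_self _).trans ((Real.dist_eq _ _).symm.le.trans (hL.dist_le_mul x y)))

lemma sg_lt {f : X → ℝ} {L : ℝ≥0} (hL : LipschitzWith L f) {x : X} {k : ℝ}
    (h : metricSubgradient f x < k) :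
    ∀ᶠ y in 𝓝 x, max (f x - f y) 0 ≤ k * dist x y := by
  have h1 := eventually_lt_of_limsup_lt h (sg_bdd hL x _)
  rw [eventually_nhdsWithin_iff] at h1
  filter_upwards [h1] with y hy
  by_cases hxy : y = x
  · subst hxy; simp
  · have := hy hxy
    have hd : 0 < dist y x := dist_pos.2 hxy
    rw [div_lt_iff₀ hd, dist_comm] at this
    exact this.le

lemma sg_measurable [MeasurableSpace X] [BorelSpace X] {f : X → ℝ} {L : ℝ≥0}
    (hL : LipschitzWith L f) : Measurable (metricSubgradient f) := by
  refine measurable_of_Iio fun c => ?_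
  by_cases hc : c ≤ 0
  · have : metricSubgradient f ⁻¹' Set.Iio c = ∅ := by
      ext x; simp only [Set.mem_preimage, Set.mem_Iio, Set.mem_empty_iff_false, iff_false, not_lt]
      exact hc.trans (sg_nonneg hL x)
    rw [this]; exact MeasurableSet.empty
  push Not at hc
  have : metricSubgradient f ⁻¹' Set.Iio c = ⋃ (k : ℚ) (_ : 0 ≤ (k:ℝ) ∧ (k:ℝ) < c) (n : ℕ),
      {x | ∀ y, dist y x < 1 / ((n:ℝ) + 1) → f x - f y ≤ k * dist x y} := by
    ext x
    simp only [Set.mem_preimage, Set.mem_Iio, Set.mem_iUnion, Set.mem_ofPred_eq, exists_prop]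
    constructor
    · intro h
      obtain ⟨k, hk1, hk2⟩ := exists_rat_btwn h
      refine ⟨k, ⟨(sg_nonneg hL x).trans hk1.le, hk2⟩, ?_⟩
      obtain ⟨δ, hδ, hb⟩ := Metric.eventually_nhds_iff.1 (sg_lt hL hk1)
      obtain ⟨n, hn⟩ := exists_nat_one_div_lt hδ
      exact ⟨n, fun y hy => (le_max_left _ _).trans (hb (hy.trans hn))⟩
    · rintro ⟨k, ⟨hk0, hk⟩, n, hn⟩
      refine (sg_le_of hk0 ?_).trans_lt hk
      exact Metric.eventually_nhds_iff.2 ⟨_, Nat.one_div_pos_of_nat, fun {y} hy => hn y hy⟩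
  rw [this]
  refine MeasurableSet.iUnion fun k => MeasurableSet.iUnion fun _ => MeasurableSet.iUnion fun n => ?_
  apply IsClosed.measurableSet
  have hcf := hL.continuous
  simp only [Set.ofPred_forall]
  refine isClosed_iInter fun y => ?_
  have : {x | dist y x < 1 / ((n:ℝ) + 1) → f x - f y ≤ k * dist x y} =
      {x | 1 / ((n:ℝ) + 1) ≤ dist y x} ∪ {x | f x - f y ≤ k * dist x y} := by
    ext x; simp only [Set.mem_ofPred_eq, Set.mem_union, ← not_lt]; tauto
  have h2 := (isClosed_le (f := fun _ : X => 1 / ((n:ℝ) + 1)) (g := fun x => dist y x) (by fun_prop)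
    (by fun_prop)).union (isClosed_le (f := fun x => f x - f y) (g := fun x => (k:ℝ) * dist x y)
    (by fun_prop) (by fun_prop))
  rw [← this] at h2
  convert h2 using 1
  
end HopfLaxLemmas

section IntegralLemmas
variable {X : Type*} [MeasurableSpace X]

lemma bdd_integrable (μ : Measure X) [IsProbabilityMeasure μ] {g : X → ℝ} (hg : Measurable g)
    (M : ℝ) (hM : ∀ x, |g x| ≤ M) : Integrable g μ :=
  Integrable.of_bound hg.aestronglyMeasurable M (Eventually.of_forall hM)

lemma exp_integrable (μ : Measure X) [IsProbabilityMeasure μ] {g : X → ℝ} (hg : Measurable g)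
    (M : ℝ) (hM : ∀ x, |g x| ≤ M) : Integrable (fun x => Real.exp (g x)) μ :=
  bdd_integrable μ hg.exp (Real.exp M) fun x => by
    rw [abs_of_pos (Real.exp_pos _)]
    exact Real.exp_le_exp.2 ((le_abs_self _).trans (hM x))

lemma exp_integral_pos (μ : Measure X) [IsProbabilityMeasure μ] {g : X → ℝ} (hg : Measurable g)
    (M : ℝ) (hM : ∀ x, |g x| ≤ M) : 0 < ∫ x, Real.exp (g x) ∂μ :=
  integral_exp_pos (exp_integrable μ hg M hM)

/-- Jensen for the weight `e^w`. -/
lemma jensen_weight (μ : Measure X) [IsProbabilityMeasure μ] {w v : X → ℝ} (hw : Measurable w)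
    (hv : Measurable v) (M N : ℝ) (hM : ∀ x, |w x| ≤ M) (hN : ∀ x, |v x| ≤ N) :
    Real.log (∫ x, Real.exp (w x) ∂μ) + (∫ x, Real.exp (w x) * v x ∂μ) / (∫ x, Real.exp (w x) ∂μ)
      ≤ Real.log (∫ x, Real.exp (w x + v x) ∂μ) := by
  set Z := ∫ x, Real.exp (w x) ∂μ with hZ
  have hZp : 0 < Z := exp_integral_pos μ hw M hM
  set c := (∫ x, Real.exp (w x) * v x ∂μ) / Z with hc
  have hi1 := exp_integrable μ hw M hM
  have hi2 : Integrable (fun x => Real.exp (w x) * v x) μ :=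
    hi1.mul_bdd (c := N) hv.aestronglyMeasurable (Eventually.of_forall hN)
  have hi3 : Integrable (fun x => Real.exp (w x + v x)) μ :=
    exp_integrable μ (hw.add hv) (M + N) fun x =>
      (abs_add_le _ _).trans (add_le_add (hM x) (hN x))
  have key : Real.exp c * Z ≤ ∫ x, Real.exp (w x + v x) ∂μ := by
    have e : Real.exp c * Z
        = ∫ x, Real.exp c * ((1 - c) * Real.exp (w x) + Real.exp (w x) * v x) ∂μ := by
      rw [integral_const_mul, integral_add (hi1.const_mul _) hi2, integral_const_mul, ← hZ]
      have : ∫ x, Real.exp (w x) * v x ∂μ = c * Z := by rw [hc]; field_simp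
      rw [this]; ring
    rw [e]
    refine integral_mono (((hi1.const_mul _).add hi2).const_mul _) hi3 fun x => ?_
    have h1 := Real.add_one_le_exp (v x - c)
    have h2 : Real.exp (w x + v x) = Real.exp c * (Real.exp (w x) * Real.exp (v x - c)) := by
      rw [← Real.exp_add, ← Real.exp_add]; congr 1; ring
    simp only
    rw [h2]
    refine mul_le_mul_of_nonneg_left ?_ (Real.exp_pos _).le
    nlinarith [Real.exp_pos (w x)]
  have := Real.log_le_log (by positivity) key
  rw [Real.log_mul (Real.exp_pos _).ne' hZp.ne', Real.log_exp] at this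
  linarith

lemma step_ineq (μ : Measure X) [IsProbabilityMeasure μ] {u D E : X → ℝ} (hu : Measurable u)
    (hD : Measurable D) (hE : Measurable E) {a ρ t M N : ℝ} (ha : 0 < a) (hρ : 0 < ρ) (ht : 0 < t)
    (huN : ∀ x, |u x| ≤ N) (hD0 : ∀ x, D x ≤ 0) (hDM : ∀ x, -(t * M) ≤ D x)
    (hE0 : ∀ x, 0 ≤ E x) (hEM : ∀ x, E x ≤ t * M)
    (h : (∫ x, Real.exp ((a + ρ * t) * (u x + D x)) ∂μ) ^ (1 / (a + ρ * t)) ≤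
      (∫ x, Real.exp (a * (u x + E x)) ∂μ) ^ (1 / a)) :
    ρ * entropyFn μ (fun x => Real.exp (a * u x)) ≤
      (a + ρ * t) * Real.exp (a * (t * M)) * a *
        ∫ x, Real.exp (a * u x) * ((E x - D x) / t) ∂μ := by
  have hb : 0 < a + ρ * t := by positivity
  set b := a + ρ * t with hbdef
  set Z := ∫ x, Real.exp (a * u x) ∂μ with hZ
  have habsu : ∀ x, |a * u x| ≤ a * N := fun x => by
    rw [abs_mul, abs_of_pos ha]; exact mul_le_mul_of_nonneg_left (huN x) ha.le
  have habsD : ∀ x, |D x| ≤ t * M := fun x => by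
    rw [abs_of_nonpos (hD0 x)]; linarith [hDM x]
  have habsE : ∀ x, |E x| ≤ t * M := fun x => by
    rw [abs_of_nonneg (hE0 x)]; exact hEM x
  have hau : Measurable fun x => a * u x := hu.const_mul a
  have hZp : 0 < Z := exp_integral_pos μ hau _ habsu
  have hiZ := exp_integrable μ hau _ habsu
  have hiu : Integrable (fun x => Real.exp (a * u x) * u x) μ :=
    hiZ.mul_bdd (c := N) hu.aestronglyMeasurable (Eventually.of_forall huN)
  have hiD : Integrable (fun x => Real.exp (a * u x) * D x) μ :=
    hiZ.mul_bdd (c := t * M) hD.aestronglyMeasurable (Eventually.of_forall habsD)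
  have hiE : Integrable (fun x => Real.exp (a * u x) * E x) μ :=
    hiZ.mul_bdd (c := t * M) hE.aestronglyMeasurable (Eventually.of_forall habsE)
  -- left side
  have hv : Measurable fun x => ρ * t * u x + b * D x := (hu.const_mul _).add (hD.const_mul _)
  have J := jensen_weight μ hau hv (a * N) (ρ * t * N + b * (t * M)) habsu fun x => by
    refine (abs_add_le _ _).trans (add_le_add ?_ ?_)
    · rw [abs_mul, abs_of_pos (by positivity)]
      exact mul_le_mul_of_nonneg_left (huN x) (by positivity)
    · rw [abs_mul, abs_of_pos hb]
      exact mul_le_mul_of_nonneg_left (habsD x) hb.le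
  have e1 : (fun x => Real.exp (a * u x + (ρ * t * u x + b * D x))) =
      fun x => Real.exp (b * (u x + D x)) := by
    funext x; congr 1; rw [hbdef]; ring
  rw [e1, ← hZ] at J
  have e2 : ∫ x, Real.exp (a * u x) * (ρ * t * u x + b * D x) ∂μ =
      ρ * t * (∫ x, Real.exp (a * u x) * u x ∂μ) + b * ∫ x, Real.exp (a * u x) * D x ∂μ := by
    rw [← integral_const_mul, ← integral_const_mul, ← integral_add (hiu.const_mul _) (hiD.const_mul _)]
    congr 1; funext x; ring
  rw [e2] at J
  -- right side
  have hpE : 0 < ∫ x, Real.exp (a * (u x + E x)) ∂μ :=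
    exp_integral_pos μ ((hu.add hE).const_mul a) (a * (N + t * M)) fun x => by
      rw [abs_mul, abs_of_pos ha]
      exact mul_le_mul_of_nonneg_left ((abs_add_le _ _).trans (add_le_add (huN x) (habsE x))) ha.le
  have hpD : 0 < ∫ x, Real.exp (b * (u x + D x)) ∂μ :=
    exp_integral_pos μ ((hu.add hD).const_mul b) (b * (N + t * M)) fun x => by
      rw [abs_mul, abs_of_pos hb]
      exact mul_le_mul_of_nonneg_left ((abs_add_le _ _).trans (add_le_add (huN x) (habsD x))) hb.le
  have hlog := Real.log_le_log (Real.rpow_pos_of_pos hpD _) h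
  rw [Real.log_rpow hpD, Real.log_rpow hpE] at hlog
  set c := Real.exp (a * (t * M)) with hc
  have hR : ∫ x, Real.exp (a * (u x + E x)) ∂μ ≤
      Z + c * a * ∫ x, Real.exp (a * u x) * E x ∂μ := by
    rw [hZ, ← integral_const_mul, ← integral_add hiZ (hiE.const_mul _)]
    refine integral_mono ?_ (hiZ.add (hiE.const_mul _)) fun x => ?_
    · by_contra hcon
      rw [integral_undef hcon] at hpE
      exact lt_irrefl _ hpE
    · simp only
      rw [mul_add, Real.exp_add]
      have h1 : Real.exp (a * E x) ≤ 1 + c * a * E x := by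
        have h2 := Real.add_one_le_exp (-(a * E x))
        have h3 : Real.exp (a * E x) ≤ c :=
          Real.exp_le_exp.2 (mul_le_mul_of_nonneg_left (hEM x) ha.le)
        have h4 : Real.exp (a * E x) * Real.exp (-(a * E x)) = 1 := by
          rw [← Real.exp_add]; simp
        have h5 : 0 ≤ a * E x := mul_nonneg ha.le (hE0 x)
        nlinarith [Real.exp_pos (a * E x)]
      nlinarith [Real.exp_pos (a * u x)]
  have hR2 : Real.log (∫ x, Real.exp (a * (u x + E x)) ∂μ) ≤
      Real.log Z + c * a * (∫ x, Real.exp (a * u x) * E x ∂μ) / Z := by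
    have h1 := Real.log_le_log hpE hR
    have h2 : Z + c * a * (∫ x, Real.exp (a * u x) * E x ∂μ) =
      Z * (1 + c * a * (∫ x, Real.exp (a * u x) * E x ∂μ) / Z) := by field_simp
    have hEnn : 0 ≤ ∫ x, Real.exp (a * u x) * E x ∂μ :=
      integral_nonneg fun x => mul_nonneg (Real.exp_pos _).le (hE0 x)
    have hcp : 0 < c := Real.exp_pos _
    have h3 : 0 < 1 + c * a * (∫ x, Real.exp (a * u x) * E x ∂μ) / Z := by positivity
    rw [h2, Real.log_mul hZp.ne' h3.ne'] at h1
    have := Real.log_le_sub_one_of_pos h3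
    linarith
  have hent : entropyFn μ (fun x => Real.exp (a * u x)) =
      a * (∫ x, Real.exp (a * u x) * u x ∂μ) - Z * Real.log Z := by
    rw [entropyFn, ← integral_const_mul, hZ]
    congr 2; funext x; rw [Real.log_exp]; ring
  have hint : ∫ x, Real.exp (a * u x) * ((E x - D x) / t) ∂μ =
      ((∫ x, Real.exp (a * u x) * E x ∂μ) - ∫ x, Real.exp (a * u x) * D x ∂μ) / t := by
    rw [← integral_sub hiE hiD, ← integral_div]
    congr 1; funext x; ring
  have hDn : ∫ x, Real.exp (a * u x) * D x ∂μ ≤ 0 :=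
    integral_nonpos fun x => mul_nonpos_of_nonneg_of_nonpos (Real.exp_pos _).le (hD0 x)
  have hc1 : 1 ≤ c := Real.one_le_exp (by
    rcases isEmpty_or_nonempty X with hX | ⟨⟨x⟩⟩
    · exact absurd μ.eq_zero_of_isEmpty (IsProbabilityMeasure.ne_zero μ)
    · exact mul_nonneg ha.le ((hE0 x).trans (hEM x)))
  rw [hent, hint]
  generalize (∫ x, Real.exp (a * u x) * E x ∂μ) = IE at *
  generalize (∫ x, Real.exp (a * u x) * D x ∂μ) = ID at *
  generalize (∫ x, Real.exp (a * u x) * u x ∂μ) = IU at *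
  generalize Real.log (∫ x, Real.exp (b * (u x + D x)) ∂μ) = L1 at *
  generalize Real.log (∫ x, Real.exp (a * (u x + E x)) ∂μ) = L2 at *
  generalize Real.log Z = lz at *
  have h6 : a * L1 ≤ b * L2 := by
    have := mul_le_mul_of_nonneg_left hlog (mul_pos ha hb).le
    have e1 : a * b * (1 / b * L1) = a * L1 := by field_simp
    have e2 : a * b * (1 / a * L2) = b * L2 := by field_simp
    linarith
  have h7 : a * (lz + (ρ * t * IU + b * ID) / Z) ≤ b * (lz + c * a * IE / Z) :=
    (mul_le_mul_of_nonneg_left J ha.le).trans (h6.trans (mul_le_mul_of_nonneg_left hR2 hb.le))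
  have h8 : a * (lz * Z + (ρ * t * IU + b * ID)) ≤ b * (lz * Z + c * a * IE) := by
    have := mul_le_mul_of_nonneg_right h7 hZp.le
    have e1 : a * (lz + (ρ * t * IU + b * ID) / Z) * Z = a * (lz * Z + (ρ * t * IU + b * ID)) := by
      field_simp
    have e2 : b * (lz + c * a * IE / Z) * Z = b * (lz * Z + c * a * IE) := by field_simp
    linarith
  have h9 : t * (ρ * (a * IU - Z * lz)) ≤ b * c * a * (IE - ID) := by
    have h10 : 0 ≤ b * a * ((c - 1) * (-ID)) :=
      mul_nonneg (mul_pos hb ha).le (mul_nonneg (by linarith) (by linarith))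
    have : b = a + ρ * t := hbdef
    have h11 : b * (lz * Z) = a * (lz * Z) + ρ * t * (lz * Z) := by rw [this]; ring
    nlinarith
  rw [← mul_div_assoc, le_div_iff₀ ht]
  linarith

/-- Passing to the limit `t → 0`. -/
lemma limit_ineq (μ : Measure X) [IsProbabilityMeasure μ] {u H : X → ℝ} (hu : Measurable u)
    (hH : Measurable H) {a ρ M N B : ℝ} (ha : 0 < a) (hρ : 0 < ρ)
    (huN : ∀ x, |u x| ≤ N) (hHB : ∀ x, |H x| ≤ B) 
    (D E : ℝ → X → ℝ)
    (hD : ∀ t, 0 < t → Measurable (D t)) (hE : ∀ t, 0 < t → Measurable (E t))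
    (hD0 : ∀ t, 0 < t → ∀ x, D t x ≤ 0) (hDM : ∀ t, 0 < t → ∀ x, -(t * M) ≤ D t x)
    (hE0 : ∀ t, 0 < t → ∀ x, 0 ≤ E t x) (hEM : ∀ t, 0 < t → ∀ x, E t x ≤ t * M)
    (h : ∀ t, 0 < t → (∫ x, Real.exp ((a + ρ * t) * (u x + D t x)) ∂μ) ^ (1 / (a + ρ * t)) ≤
      (∫ x, Real.exp (a * (u x + E t x)) ∂μ) ^ (1 / a))
    (hlim : ∀ x, ∀ η, 0 < η → ∀ᶠ t in 𝓝[>] (0:ℝ), E t x - D t x ≤ t * (H x + η)) :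
    ρ * entropyFn μ (fun x => Real.exp (a * u x)) ≤ a ^ 2 * ∫ x, Real.exp (a * u x) * H x ∂μ := by
  have habsu : ∀ x, |a * u x| ≤ a * N := fun x => by
    rw [abs_mul, abs_of_pos ha]; exact mul_le_mul_of_nonneg_left (huN x) ha.le
  have hiZ := exp_integrable μ (hu.const_mul a) _ habsu
  have hiH : Integrable (fun x => Real.exp (a * u x) * H x) μ :=
    hiZ.mul_bdd (c := B) hH.aestronglyMeasurable (Eventually.of_forall hHB)
  let R : ℝ → X → ℝ := fun t x => max ((E t x - D t x) / t - H x) 0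
  have hRm : ∀ t, 0 < t → Measurable (R t) := fun t ht =>
    ((((hE t ht).sub (hD t ht)).div_const t).sub hH).max measurable_const
  have hq : ∀ t, 0 < t → ∀ x, |(E t x - D t x) / t| ≤ 2 * M := fun t ht x => by
    rw [abs_of_nonneg (div_nonneg (by linarith [hD0 t ht x, hE0 t ht x]) ht.le), div_le_iff₀ ht]
    linarith [hDM t ht x, hEM t ht x]
  have hRb : ∀ t, 0 < t → ∀ x, |R t x| ≤ 2 * M + B := fun t ht x => by
    have h1 := abs_le.1 (hq t ht x)
    have h2 := abs_le.1 (hHB x)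
    rw [abs_of_nonneg (le_max_right _ _)]
    exact max_le (by linarith) (by linarith [abs_nonneg ((E t x - D t x) / t), abs_nonneg (H x), hq t ht x, hHB x])
  have hT : Tendsto (fun t => ∫ x, Real.exp (a * u x) * R t x ∂μ) (𝓝[>] (0:ℝ)) (𝓝 0) := by
    have h00 : ∫ x, (0:ℝ) ∂μ = 0 := by simp
    conv_rhs => rw [← h00]
    refine tendsto_integral_filter_of_dominated_convergence
      (fun x => Real.exp (a * u x) * (2 * M + B)) ?_ ?_ (hiZ.mul_const _) ?_
    · filter_upwards [self_mem_nhdsWithin] with t ht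
      exact ((hu.const_mul a).exp.mul (hRm t ht)).aestronglyMeasurable
    · filter_upwards [self_mem_nhdsWithin] with t ht
      refine Eventually.of_forall fun x => ?_
      rw [norm_mul, Real.norm_eq_abs, Real.norm_eq_abs, abs_of_pos (Real.exp_pos _)]
      exact mul_le_mul_of_nonneg_left (hRb t ht x) (Real.exp_pos _).le
    · refine Eventually.of_forall fun x => ?_
      have : Tendsto (fun t => R t x) (𝓝[>] (0:ℝ)) (𝓝 0) := by
        rw [Metric.tendsto_nhds]
        intro ε hε
        filter_upwards [hlim x (ε / 2) (by positivity), self_mem_nhdsWithin] with t h1 ht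
        replace ht : 0 < t := ht
        rw [Real.dist_eq, sub_zero, abs_of_nonneg (le_max_right _ _)]
        refine max_lt ?_ hε
        have : (E t x - D t x) / t ≤ H x + ε / 2 := by rw [div_le_iff₀ ht]; linarith
        linarith
      simpa using this.const_mul (Real.exp (a * u x))
  have hT2 : Tendsto (fun t => (a + ρ * t) * Real.exp (a * (t * M)) * a *
      ((∫ x, Real.exp (a * u x) * H x ∂μ) + ∫ x, Real.exp (a * u x) * R t x ∂μ)) (𝓝[>] (0:ℝ))
      (𝓝 ((a + ρ * 0) * Real.exp (a * (0 * M)) * a *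
        ((∫ x, Real.exp (a * u x) * H x ∂μ) + 0))) := by
    refine Tendsto.mul ?_ (hT.const_add _)
    have : Continuous fun t : ℝ => (a + ρ * t) * Real.exp (a * (t * M)) * a := by fun_prop
    exact (this.tendsto 0).mono_left nhdsWithin_le_nhds
  have e : (a + ρ * 0) * Real.exp (a * (0 * M)) * a *
        ((∫ x, Real.exp (a * u x) * H x ∂μ) + 0) = a ^ 2 * ∫ x, Real.exp (a * u x) * H x ∂μ := by
    rw [mul_zero, zero_mul, mul_zero, Real.exp_zero]; ring
  rw [e] at hT2
  refine ge_of_tendsto hT2 ?_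
  filter_upwards [self_mem_nhdsWithin] with t ht
  replace ht : 0 < t := ht
  refine (step_ineq μ hu (hD t ht) (hE t ht) ha hρ ht huN (hD0 t ht) (hDM t ht) (hE0 t ht)
    (hEM t ht) (h t ht)).trans ?_
  refine mul_le_mul_of_nonneg_left ?_ (by positivity)
  have hiR : Integrable (fun x => Real.exp (a * u x) * R t x) μ :=
    hiZ.mul_bdd (c := 2 * M + B) (hRm t ht).aestronglyMeasurable (Eventually.of_forall (hRb t ht))
  rw [← integral_add hiH hiR]
  refine integral_mono ?_ (hiH.add hiR) fun x => ?_
  · exact hiZ.mul_bdd (c := 2 * M) (((hE t ht).sub (hD t ht)).div_const t).aestronglyMeasurable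
      (Eventually.of_forall (hq t ht))
  · simp only
    rw [← mul_add]
    refine mul_le_mul_of_nonneg_left ?_ (Real.exp_pos _).le
    have := le_max_left ((E t x - D t x) / t - H x) 0
    show _ ≤ H x + max ((E t x - D t x) / t - H x) 0
    linarith

end IntegralLemmas

section ClampLemmas

lemma log_clamp_sub {x y : ℝ} (hx : 0 < x) (hy : 0 < y) :
    Real.log x - Real.log y ≤ (x - y) / y := by
  rw [← Real.log_div hx.ne' hy.ne']
  have := Real.log_le_sub_one_of_pos (div_pos hx hy)
  have e : (x - y) / y = x / y - 1 := by field_simp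
  linarith

lemma clamp_sub (ε N s r : ℝ) : max ε (min s N) - max ε (min r N) ≤ max (s - r) 0 := by
  rcases max_cases ε (min s N) with h | h <;> rcases max_cases ε (min r N) with h' | h' <;>
  rcases min_cases s N with g | g <;> rcases min_cases r N with g' | g' <;>
  rcases max_cases (s - r) 0 with k | k <;> linarith

lemma clamp_pos {ε : ℝ} (hε : 0 < ε) (N s : ℝ) : 0 < max ε (min s N) :=
  hε.trans_le (le_max_left _ _)

lemma logclamp_bound {κ ε N : ℝ} (hκ : 0 < κ) (hε : 0 < ε) (hN : ε ≤ N) (s : ℝ) :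
    |κ * Real.log (max ε (min s N))| ≤ κ * (|Real.log ε| + |Real.log N|) := by
  rw [abs_mul, abs_of_pos hκ]
  refine mul_le_mul_of_nonneg_left ?_ hκ.le
  have h1 : Real.log ε ≤ Real.log (max ε (min s N)) := Real.log_le_log hε (le_max_left _ _)
  have h2 : Real.log (max ε (min s N)) ≤ Real.log N :=
    Real.log_le_log (clamp_pos hε _ _) (max_le hN (min_le_right _ _))
  rw [abs_le]
  constructor
  · linarith [neg_abs_le (Real.log ε), abs_nonneg (Real.log N)]
  · linarith [le_abs_self (Real.log N), abs_nonneg (Real.log ε)]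

lemma logclamp_lip {X : Type*} [MetricSpace X] {κ ε N : ℝ} (hκ : 0 < κ) (hε : 0 < ε)
    {g : X → ℝ} {L : ℝ≥0} (hg : LipschitzWith L g) :
    LipschitzWith (Real.toNNReal (κ / ε) * L) (fun x => κ * Real.log (max ε (min (g x) N))) := by
  have key : ∀ x y, κ * Real.log (max ε (min (g x) N)) - κ * Real.log (max ε (min (g y) N)) ≤
      (κ / ε) * (L * dist x y) := by
    intro x y
    have h0 := hg.dist_le_mul x y
    have h1 := log_clamp_sub (clamp_pos hε N (g x)) (clamp_pos hε N (g y))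
    have h2 := clamp_sub ε N (g x) (g y)
    have h3 : max (g x - g y) 0 ≤ L * dist x y :=
      max_le ((le_abs_self _).trans ((Real.dist_eq _ _).symm.le.trans h0)) (by positivity)
    have h4 : (max ε (min (g x) N) - max ε (min (g y) N)) / max ε (min (g y) N) ≤
        (L * dist x y) / ε := by
      refine div_le_div₀ (by positivity) (h2.trans h3) hε (le_max_left _ _)
    rw [← mul_sub, div_mul_eq_mul_div, mul_div_assoc]
    exact mul_le_mul_of_nonneg_left (h1.trans h4) hκ.le
  refine LipschitzWith.of_dist_le_mul fun x y => ?_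
  rw [NNReal.coe_mul, Real.coe_toNNReal _ (by positivity), mul_assoc, Real.dist_eq, abs_le]
  constructor
  · have := key y x
    rw [dist_comm] at this
    linarith
  · exact key x y

lemma max_clamp {ε N s : ℝ} (hε : 0 < ε) (hN : ε ≤ N) :
    max (max ε (min s N)) (max ε (min (-s) N)) = max ε (min |s| N) := by
  rcases le_total 0 s with hs | hs
  · rw [abs_of_nonneg hs]
    apply max_eq_left
    refine max_le (le_max_left _ _) ?_
    exact (min_le_left _ _).trans ((by linarith : -s ≤ ε).trans (le_max_left _ _))
  · rw [abs_of_nonpos hs]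
    apply max_eq_right
    refine max_le (le_max_left _ _) ?_
    exact (min_le_left _ _).trans ((by linarith : s ≤ ε).trans (le_max_left _ _))

end ClampLemmas

lemma trunc_ineq
    {X : Type*} [MetricSpace X] [MeasurableSpace X] [BorelSpace X]
    (μ : Measure X) [IsProbabilityMeasure μ]
    (p q : ℝ) (hpq : p.HolderConjugate q)
    (a ρ : ℝ) (ha : 0 < a) (hρ : 0 < ρ)
    (hhc : ∀ f : X → ℝ, Measurable f → (∃ M : ℝ, ∀ x, |f x| ≤ M) → ∀ t : ℝ, 0 ≤ t →
      (∫ x, Real.exp ((a + ρ * t) * hopfLaxP p f t x) ∂μ) ^ (1 / (a + ρ * t)) ≤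
        (∫ x, Real.exp (a * f x) ∂μ) ^ (1 / a))
    {f : X → ℝ} {L : ℝ≥0} (hL : LipschitzWith L f) {ε N : ℝ} (hε : 0 < ε) (hN : ε ≤ N) :
    ρ * entropyFn μ (fun x => (max ε (min |f x| N)) ^ q) ≤
      a ^ 2 * ((q / a) ^ q / q) * ∫ x, (metricSubgradient f x) ^ q ∂μ := by
  have hq := hpq.symm.pos
  have hp := hpq.pos
  set κ := q / a with hκdef
  have hκ : 0 < κ := by positivity
  set G := metricSubgradient f with hG
  set c1 : X → ℝ := fun x => max ε (min (f x) N) with hc1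
  set c2 : X → ℝ := fun x => max ε (min (-f x) N) with hc2
  set u1 : X → ℝ := fun x => κ * Real.log (c1 x) with hu1
  set u2 : X → ℝ := fun x => κ * Real.log (c2 x) with hu2
  set m : X → ℝ := fun x => max ε (min |f x| N) with hm
  have hc1p : ∀ x, 0 < c1 x := fun x => clamp_pos hε _ _
  have hc2p : ∀ x, 0 < c2 x := fun x => clamp_pos hε _ _
  have hmp : ∀ x, 0 < m x := fun x => clamp_pos hε _ _
  have hmm : ∀ x, max (c1 x) (c2 x) = m x := fun x => max_clamp hε hN
  set u : X → ℝ := fun x => κ * Real.log (m x) with hu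
  have humax : ∀ x, u x = max (u1 x) (u2 x) := fun x => by
    simp only [hu, hu1, hu2]
    rw [← mul_max_of_nonneg _ _ hκ.le]
    congr 1
    rw [← hmm]
    rcases le_total (c1 x) (c2 x) with h | h
    · rw [max_eq_right h, max_eq_right (Real.log_le_log (hc1p x) h)]
    · rw [max_eq_left h, max_eq_left (Real.log_le_log (hc2p x) h)]
  set L' := Real.toNNReal (κ / ε) * L with hL'
  have hlip1 : LipschitzWith L' u1 := logclamp_lip hκ hε hL
  have hlip2 : LipschitzWith L' u2 := logclamp_lip hκ hε hL.neg
  have hlip2' : LipschitzWith L' (fun x => - u2 x) := hlip2.neg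
  set N' := κ * (|Real.log ε| + |Real.log N|) with hN'
  have hb1 : ∀ x, |u1 x| ≤ N' := fun x => logclamp_bound hκ hε hN _
  have hb2 : ∀ x, |u2 x| ≤ N' := fun x => logclamp_bound hκ hε hN _
  have hb2' : ∀ x, |(fun x => - u2 x) x| ≤ N' := fun x => by simpa using hb2 x
  have hbu : ∀ x, |u x| ≤ N' := fun x => logclamp_bound hκ hε hN _
  have hfc := hL.continuous
  have hc1c : Continuous c1 := by fun_prop
  have hum1 : Measurable u1 := hlip1.continuous.measurable
  have hum2 : Measurable u2 := hlip2.continuous.measurable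
  have hmc : Continuous m := by fun_prop
  have hum : Measurable u := (hmc.measurable.log).const_mul κ
  have hGm : Measurable G := sg_measurable hL
  have hG0 : ∀ x, 0 ≤ G x := fun x => sg_nonneg hL x
  have hGL : ∀ x, G x ≤ L := fun x => sg_le_lip hL x
  set H : X → ℝ := fun x => (κ * G x / m x) ^ q / q with hH
  have hHm : Measurable H := (((hGm.const_mul κ).div hmc.measurable).pow_const q).div_const q
  have hmε : ∀ x, ε ≤ m x := fun x => le_max_left _ _
  have hHB : ∀ x, |H x| ≤ (κ * L / ε) ^ q / q := fun x => by
    have h0 : 0 ≤ κ * G x / m x := div_nonneg (mul_nonneg hκ.le (hG0 x)) (hmp x).le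
    rw [abs_of_nonneg (by positivity)]
    refine div_le_div_of_nonneg_right (Real.rpow_le_rpow h0 ?_ hq.le) hq.le
    exact div_le_div₀ (by positivity) (mul_le_mul_of_nonneg_left (hGL x) hκ.le) hε (hmε x)
  have main := limit_ineq (M := (L' : ℝ) ^ q / q) μ hum hHm ha hρ hbu hHB
    (fun t x => hopfLaxP p u1 t x - u1 x)
    (fun t x => - hopfLaxP p (fun x => - u2 x) t x - u2 x)
    (fun t ht => (hl_measurable hp ht hb1).sub hum1)
    (fun t ht => (hl_measurable hp ht hb2').neg.sub hum2)
    (fun t ht x => by have := hl_le_self hp ht hb1 x; linarith)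
    (fun t ht x => by have := hl_lip hpq ht hlip1 x; linarith)
    (fun t ht x => by have := hl_le_self hp ht hb2' x; linarith)
    (fun t ht x => by have := hl_lip hpq ht hlip2' x; linarith)
    ?_ ?_
  · have e1 : (fun x => Real.exp (a * u x)) = fun x => m x ^ q := by
      funext x
      rw [Real.rpow_def_of_pos (hmp x)]
      congr 1
      simp only [hu, hκdef]
      field_simp
    have e2 : (fun x => Real.exp (a * u x) * H x) = fun x => κ ^ q / q * G x ^ q := by
      funext x
      have := congrFun e1 x
      rw [this]
      simp only [hH]
      rw [Real.div_rpow (mul_nonneg hκ.le (hG0 x)) (hmp x).le, Real.mul_rpow hκ.le (hG0 x)]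
      have := (Real.rpow_pos_of_pos (hmp x) q).ne'
      field_simp
    rw [e1, e2, integral_const_mul] at main
    linarith
  · -- the hypercontractive bound
    intro t ht
    set g : X → ℝ := fun x => max (u1 x) (- hopfLaxP p (fun x => - u2 x) t x) with hg
    have hgm : Measurable g := hum1.max (hl_measurable hp ht hb2').neg
    have hgb : ∀ x, |g x| ≤ N' := fun x => by
      refine (abs_max_le_max_abs_abs).trans (max_le (hb1 x) ?_)
      rw [abs_neg]; exact hl_abs hp ht hb2' x
    have h0 := hhc g hgm ⟨N', hgb⟩ t ht.le
    have hb : 0 < a + ρ * t := by positivity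
    have hw : ∀ x, u x + (hopfLaxP p u1 t x - u1 x) ≤ hopfLaxP p g t x := by
      intro x
      have h1 : hopfLaxP p u1 t x ≤ hopfLaxP p g t x := hl_ge ht x fun y => by
        have := hl_le hp ht hb1 x y
        have := le_max_left (u1 y) (- hopfLaxP p (fun x => - u2 x) t y)
        simp only [hg]
        linarith
      have h2 : u2 x ≤ hopfLaxP p g t x := hl_ge ht x fun y => by
        have h3 := hl_le hp ht hb2' y x
        have := le_max_right (u1 y) (- hopfLaxP p (fun x => - u2 x) t y)
        rw [dist_comm] at h3
        simp only [hg]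
        linarith
      have h3 := hl_le_self hp ht hb1 x
      rw [humax]
      rcases max_cases (u1 x) (u2 x) with h | h <;> linarith
    have hgu : ∀ x, g x ≤ u x + (- hopfLaxP p (fun x => - u2 x) t x - u2 x) := by
      intro x
      have h3 := hl_le_self hp ht hb2' x
      rw [humax]
      simp only [hg]
      refine max_le ?_ ?_
      · linarith [le_max_left (u1 x) (u2 x)]
      · linarith [le_max_right (u1 x) (u2 x)]
    have hm1 : Measurable (hopfLaxP p u1 t) := hl_measurable hp ht hb1
    have hmQ2 : Measurable (hopfLaxP p (fun x => - u2 x) t) := hl_measurable hp ht hb2'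
    have hA1 := hl_abs hp ht hb1
    have hA2 := hl_abs hp ht hb2'
    have hA3 := hl_abs hp ht hgb
    refine le_trans ?_ (h0.trans ?_)
    · refine Real.rpow_le_rpow (integral_nonneg fun x => (Real.exp_pos _).le) ?_ (by positivity)
      refine integral_mono ?_ ?_ fun x => ?_
      · refine exp_integrable μ ((hum.add (hm1.sub hum1)).const_mul _) ((a + ρ * t) * (3 * N')) ?_
        intro x
        rw [abs_mul, abs_of_pos hb]
        refine mul_le_mul_of_nonneg_left ?_ hb.le
        have := abs_le.1 (hbu x)
        have := abs_le.1 (hb1 x)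
        have := abs_le.1 (hA1 x)
        rw [abs_le]; constructor <;> linarith
      · refine exp_integrable μ ((hl_measurable hp ht hgb).const_mul _) ((a + ρ * t) * N') ?_
        intro x
        rw [abs_mul, abs_of_pos hb]
        exact mul_le_mul_of_nonneg_left (hA3 x) hb.le
      · exact Real.exp_le_exp.2 (mul_le_mul_of_nonneg_left (hw x) hb.le)
    · refine Real.rpow_le_rpow (integral_nonneg fun x => (Real.exp_pos _).le) ?_ (by positivity)
      refine integral_mono ?_ ?_ fun x => ?_
      · refine exp_integrable μ (hgm.const_mul _) (a * N') ?_
        intro x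
        rw [abs_mul, abs_of_pos ha]
        exact mul_le_mul_of_nonneg_left (hgb x) ha.le
      · refine exp_integrable μ ((hum.add (hmQ2.neg.sub hum2)).const_mul _) (a * (3 * N')) ?_
        intro x
        rw [abs_mul, abs_of_pos ha]
        refine mul_le_mul_of_nonneg_left ?_ ha.le
        have := abs_le.1 (hbu x)
        have := abs_le.1 (hb2 x)
        have := abs_le.1 (hA2 x)
        rw [abs_le]; constructor <;> linarith
      · exact Real.exp_le_exp.2 (mul_le_mul_of_nonneg_left (hgu x) ha.le)
  · -- the pointwise limit
    intro x η hη
    have hk0 : 0 ≤ κ * G x / m x := div_nonneg (mul_nonneg hκ.le (hG0 x)) (hmp x).le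
    obtain ⟨k, hk1, hk2⟩ : ∃ k, κ * G x / m x < k ∧ k ^ q / q < H x + η := by
      have hc : ContinuousAt (fun k : ℝ => k ^ q / q) (κ * G x / m x) :=
        (Real.continuousAt_rpow_const _ q (Or.inr hq.le)).div_const q
      have h1 : ∀ᶠ k in 𝓝 (κ * G x / m x), k ^ q / q < H x + η :=
        hc.eventually (gt_mem_nhds (by simp only [hH]; linarith))
      have h2 := h1.filter_mono (nhdsWithin_le_nhds (s := Set.Ioi (κ * G x / m x)))
      obtain ⟨k, h3, h4⟩ := (h2.and self_mem_nhdsWithin).exists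
      exact ⟨k, h4, h3⟩
    have hk : 0 < k := hk0.trans_lt hk1
    have hGk : G x < k * m x / κ := by
      rw [lt_div_iff₀ hκ]
      rw [div_lt_iff₀ (hmp x)] at hk1
      linarith
    obtain ⟨G', hG'1, hG'2⟩ := exists_between hGk
    have hloc := sg_lt hL hG'1
    have z0 : (0:ℝ) ^ q / q = 0 := by rw [Real.zero_rpow hq.ne', zero_div]
    by_cases hx : -ε < f x
    · have hc2x : ∀ y, -ε < f y → c2 y = ε := fun y hy =>
        max_eq_left ((min_le_left _ _).trans (by linarith))
      have hmx : m x = c1 x := by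
        rw [← hmm, hc2x x hx]; exact max_eq_left (le_max_left _ _)
      have l1 : ∀ᶠ y in 𝓝 x, u1 x - u1 y ≤ k * dist x y := by
        have hlt : κ * G' / k < c1 x := by
          rw [div_lt_iff₀ hk, ← hmx]
          rw [lt_div_iff₀ hκ] at hG'2
          linarith
        filter_upwards [hloc, hc1c.continuousAt.eventually (lt_mem_nhds hlt)] with y h1 h2
        have h3 := log_clamp_sub (hc1p x) (hc1p y)
        have h4 := clamp_sub ε N (f x) (f y)
        have h5 : (c1 x - c1 y) / c1 y ≤ (G' * dist x y) / c1 y :=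
          div_le_div_of_nonneg_right (h4.trans h1) (hc1p y).le
        have h6 : κ * ((G' * dist x y) / c1 y) ≤ k * dist x y := by
          rw [div_lt_iff₀ hk] at h2
          rw [← mul_div_assoc, div_le_iff₀ (hc1p y)]
          nlinarith [dist_nonneg (x := x) (y := y)]
        simp only [hu1]
        rw [← mul_sub]
        exact (mul_le_mul_of_nonneg_left (h3.trans h5) hκ.le).trans h6
      have l2 : ∀ᶠ y in 𝓝 x, (fun x => - u2 x) x - (fun x => - u2 x) y ≤ 0 * dist x y := by
        filter_upwards [hfc.continuousAt.eventually (lt_mem_nhds hx)] with y hy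
        simp only [hu2]
        rw [hc2x x hx, hc2x y hy]; simp
      filter_upwards [hl_local hpq hlip1 x hk.le l1, hl_local hpq hlip2' x le_rfl l2,
        self_mem_nhdsWithin] with t h1 h2 ht
      rw [z0, mul_zero] at h2
      have := mul_le_mul_of_nonneg_left hk2.le (le_of_lt ht)
      linarith
    · push Not at hx
      have hc1x : c1 x = ε := max_eq_left ((min_le_left _ _).trans (by linarith))
      have hmx : m x = c2 x := by
        rw [← hmm, hc1x]; exact max_eq_right (le_max_left _ _)
      have l1 : ∀ᶠ y in 𝓝 x, u1 x - u1 y ≤ 0 * dist x y := by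
        refine Eventually.of_forall fun y => ?_
        have : Real.log (c1 x) ≤ Real.log (c1 y) :=
          Real.log_le_log (hc1p x) (by rw [hc1x]; exact le_max_left _ _)
        have := mul_le_mul_of_nonneg_left this hκ.le
        simp only [hu1]
        linarith
      have l2 : ∀ᶠ y in 𝓝 x, (fun x => - u2 x) x - (fun x => - u2 x) y ≤ k * dist x y := by
        filter_upwards [hloc] with y h1
        have h3 := log_clamp_sub (hc2p y) (hc2p x)
        have h4 := clamp_sub ε N (-f y) (-f x)
        have e : -f y - -f x = f x - f y := by ring
        rw [e] at h4
        have h5 : (c2 y - c2 x) / c2 x ≤ (G' * dist x y) / c2 x :=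
          div_le_div_of_nonneg_right (h4.trans h1) (hc2p x).le
        have h6 : κ * ((G' * dist x y) / c2 x) ≤ k * dist x y := by
          rw [lt_div_iff₀ hκ, hmx] at hG'2
          rw [← mul_div_assoc, div_le_iff₀ (hc2p x)]
          nlinarith [dist_nonneg (x := x) (y := y)]
        have h7 := (mul_le_mul_of_nonneg_left (h3.trans h5) hκ.le).trans h6
        simp only [hu2]
        linarith
      filter_upwards [hl_local hpq hlip1 x le_rfl l1, hl_local hpq hlip2' x hk.le l2,
        self_mem_nhdsWithin] with t h1 h2 ht
      rw [z0, mul_zero] at h1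
      have := mul_le_mul_of_nonneg_left hk2.le (le_of_lt ht)
      linarith

/-- Removing the truncation. -/
lemma untruncate {X : Type*} [MeasurableSpace X] (μ : Measure X) [IsProbabilityMeasure μ]
    {f : X → ℝ} (hf : Measurable f) {q B : ℝ} (hq : 1 < q) (hB : 0 ≤ B)
    (h : ∀ ε N : ℝ, 0 < ε → ε ≤ N → entropyFn μ (fun x => (max ε (min |f x| N)) ^ q) ≤ B) :
    entropyFn μ (fun x => |f x| ^ q) ≤ B := by
  have hq0 : 0 < q := by linarith
  have hmul : ∀ r : ℝ, 0 ≤ r → 0 ≤ r * Real.log r + 1 := fun r hr => by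
    rcases hr.eq_or_lt with h0 | h0
    · simp [← h0]
    · have := Real.one_sub_inv_le_log_of_pos h0
      have := mul_le_mul_of_nonneg_left this hr
      have e : r * (1 - r⁻¹) = r - 1 := by field_simp
      linarith
  have hhm : Measurable fun x => |f x| ^ q := hf.abs.pow_const q
  have hh0 : ∀ x, 0 ≤ |f x| ^ q := fun x => by positivity
  by_cases hint : Integrable (fun x => |f x| ^ q) μ
  swap
  · have h2 : ¬ Integrable (fun x => |f x| ^ q * Real.log (|f x| ^ q)) μ := by
      intro hcon
      apply hint
      refine Integrable.mono' (hcon.abs.add (integrable_const (Real.exp 1)))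
        hhm.aestronglyMeasurable (Eventually.of_forall fun x => ?_)
      simp only [Pi.add_apply]
      rw [Real.norm_eq_abs, abs_of_nonneg (hh0 x)]
      generalize hr : |f x| ^ q = r
      have hr0 : 0 ≤ r := hr ▸ hh0 x
      by_cases hle : r ≤ Real.exp 1
      · linarith [abs_nonneg (r * Real.log r)]
      · push Not at hle
        have : 1 ≤ Real.log r := by
          rw [Real.le_log_iff_exp_le ((Real.exp_pos 1).trans hle)]; exact hle.le
        have h3 := le_abs_self (r * Real.log r)
        nlinarith [Real.exp_pos 1]
    rw [entropyFn, integral_undef h2, integral_undef hint]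
    simpa using hB
  let hn : ℕ → X → ℝ := fun n x => (max (1 / ((n:ℝ) + 1)) (min |f x| ((n:ℝ) + 1))) ^ q
  have hεN : ∀ n : ℕ, 1 / ((n:ℝ) + 1) ≤ (n:ℝ) + 1 := fun n => by
    have : (1:ℝ) ≤ (n:ℝ) + 1 := by linarith [n.cast_nonneg (α := ℝ)]
    rw [div_le_iff₀ (by positivity)]; nlinarith
  have hεp : ∀ n : ℕ, 0 < 1 / ((n:ℝ) + 1) := fun n => Nat.one_div_pos_of_nat
  have hε1 : ∀ n : ℕ, 1 / ((n:ℝ) + 1) ≤ 1 := fun n => by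
    have : (1:ℝ) ≤ (n:ℝ) + 1 := by linarith [n.cast_nonneg (α := ℝ)]
    rw [div_le_iff₀ (by positivity)]; linarith
  have hnm : ∀ n, Measurable (hn n) := fun n =>
    (measurable_const.max (hf.abs.min measurable_const)).pow_const q
  have hn0 : ∀ n x, 0 ≤ hn n x := fun n x =>
    Real.rpow_nonneg ((hεp n).le.trans (le_max_left _ _)) q
  have hnle : ∀ n x, hn n x ≤ |f x| ^ q + 1 := fun n x => by
    have h1 : max (1 / ((n:ℝ) + 1)) (min |f x| ((n:ℝ) + 1)) ≤ max 1 |f x| :=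
      max_le_max (hε1 n) (min_le_left _ _)
    have h2 : hn n x ≤ (max 1 |f x|) ^ q :=
      Real.rpow_le_rpow ((hεp n).le.trans (le_max_left _ _)) h1 hq0.le
    rcases max_cases 1 |f x| with h | h
    · rw [h.1, Real.one_rpow] at h2; linarith [hh0 x]
    · rw [h.1] at h2; linarith
  have hnlim : ∀ x, Tendsto (fun n => hn n x) atTop (𝓝 (|f x| ^ q)) := fun x => by
    refine Tendsto.rpow_const ?_ (Or.inr hq0.le)
    have h1 : Tendsto (fun n : ℕ => 1 / ((n:ℝ) + 1)) atTop (𝓝 0) :=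
      tendsto_one_div_add_atTop_nhds_zero_nat
    have h2 : Tendsto (fun n : ℕ => min |f x| ((n:ℝ) + 1)) atTop (𝓝 |f x|) := by
      refine tendsto_const_nhds.congr' ?_
      obtain ⟨n0, hn0⟩ := exists_nat_ge |f x|
      filter_upwards [eventually_ge_atTop n0] with n hn
      have : (n0:ℝ) ≤ n := by exact_mod_cast hn
      rw [min_eq_left (by linarith)]
    have h3 := h1.max h2
    rwa [max_eq_right (abs_nonneg _)] at h3
  have hnint : ∀ n, Integrable (hn n) μ := fun n =>
    (hint.add (integrable_const 1)).mono' (hnm n).aestronglyMeasurable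
      (Eventually.of_forall fun x => by
        rw [Real.norm_eq_abs, abs_of_nonneg (hn0 n x)]; exact hnle n x)
  have hIlim : Tendsto (fun n => ∫ x, hn n x ∂μ) atTop (𝓝 (∫ x, |f x| ^ q ∂μ)) :=
    tendsto_integral_of_dominated_convergence (fun x => |f x| ^ q + 1)
      (fun n => (hnm n).aestronglyMeasurable) (hint.add (integrable_const 1))
      (fun n => Eventually.of_forall fun x => by
        rw [Real.norm_eq_abs, abs_of_nonneg (hn0 n x)]; exact hnle n x)
      (Eventually.of_forall hnlim)
  let ψ : ℝ → ℝ := fun r => r * Real.log r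
  have hψ : Continuous ψ := Real.continuous_mul_log
  have hφint : ∀ n, Integrable (fun x => ψ (hn n x)) μ := fun n => by
    have hbd : ∀ x, hn n x ∈ Set.Icc 0 (((n:ℝ) + 1) ^ q) := fun x =>
      ⟨hn0 n x, Real.rpow_le_rpow ((hεp n).le.trans (le_max_left _ _))
        (max_le (hεN n) (min_le_right _ _)) hq0.le⟩
    obtain ⟨C, hC⟩ := (isCompact_Icc (a := (0:ℝ)) (b := ((n:ℝ) + 1) ^ q)).exists_bound_of_continuousOn
      hψ.continuousOn
    exact bdd_integrable μ (hψ.measurable.comp (hnm n)) C fun x => hC _ (hbd x)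
  have hbound : ∀ n, ∫⁻ x, ENNReal.ofReal (ψ (hn n x) + 1) ∂μ ≤
      ENNReal.ofReal (B + 1 + ψ (∫ x, hn n x ∂μ)) := fun n => by
    have hi : Integrable (fun x => ψ (hn n x) + 1) μ := (hφint n).add (integrable_const 1)
    rw [← ofReal_integral_eq_lintegral_ofReal hi
      (Eventually.of_forall fun x => hmul _ (hn0 n x))]
    refine ENNReal.ofReal_le_ofReal ?_
    rw [integral_add (hφint n) (integrable_const 1)]
    have := h _ _ (hεp n) (hεN n)
    rw [entropyFn] at this
    simp only [integral_const, probReal_univ, smul_eq_mul, mul_one]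
    have h3 : ∫ x, ψ (hn n x) ∂μ - ψ (∫ x, hn n x ∂μ) ≤ B := this
    linarith
  have hfatou : ∫⁻ x, ENNReal.ofReal (ψ (|f x| ^ q) + 1) ∂μ ≤
      ENNReal.ofReal (B + 1 + ψ (∫ x, |f x| ^ q ∂μ)) := by
    have h1 : ∀ x, ENNReal.ofReal (ψ (|f x| ^ q) + 1) =
        liminf (fun n => ENNReal.ofReal (ψ (hn n x) + 1)) atTop := fun x => by
      refine (Tendsto.liminf_eq ?_).symm
      exact ENNReal.tendsto_ofReal (((hψ.tendsto _).comp (hnlim x)).add_const 1)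
    have h2 : Tendsto (fun n => ENNReal.ofReal (B + 1 + ψ (∫ x, hn n x ∂μ))) atTop
        (𝓝 (ENNReal.ofReal (B + 1 + ψ (∫ x, |f x| ^ q ∂μ)))) :=
      ENNReal.tendsto_ofReal (((hψ.tendsto _).comp hIlim).const_add _)
    rw [← h2.liminf_eq]
    simp only [h1]
    refine (lintegral_liminf_le fun n => ?_).trans (liminf_le_liminf (Eventually.of_forall hbound))
    exact ((hψ.measurable.comp (hnm n)).add_const 1).ennreal_ofReal
  have hnn : ∀ x, 0 ≤ ψ (|f x| ^ q) + 1 := fun x => hmul _ (hh0 x)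
  have hψm : Measurable fun x => ψ (|f x| ^ q) := hψ.measurable.comp hhm
  have hI1 : Integrable (fun x => ψ (|f x| ^ q) + 1) μ := by
    refine ⟨(hψm.add_const 1).aestronglyMeasurable, ?_⟩
    rw [hasFiniteIntegral_iff_ofReal (Eventually.of_forall hnn)]
    exact hfatou.trans_lt ENNReal.ofReal_lt_top
  have hI2 : Integrable (fun x => ψ (|f x| ^ q)) μ := by
    have := hI1.sub (integrable_const 1)
    refine this.congr (Eventually.of_forall fun x => ?_)
    simp
  rw [← ofReal_integral_eq_lintegral_ofReal hI1 (Eventually.of_forall hnn)] at hfatou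
  have hpos : 0 ≤ B + 1 + ψ (∫ x, |f x| ^ q ∂μ) := by
    have : 0 ≤ ψ (∫ x, |f x| ^ q ∂μ) + 1 := hmul _ (integral_nonneg hh0)
    linarith
  rw [ENNReal.ofReal_le_ofReal_iff hpos, integral_add hI2 (integrable_const 1)] at hfatou
  simp only [integral_const, probReal_univ, smul_eq_mul, mul_one] at hfatou
  have : entropyFn μ (fun x => |f x| ^ q) =
    ∫ x, ψ (|f x| ^ q) ∂μ - ψ (∫ x, |f x| ^ q ∂μ) := rfl
  rw [this]; linarith

/-- Hypercontractivity of the Hamilton–Jacobi (Hopf–Lax) semigroup implies the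
`q`-log-Sobolev inequality with the constant `K₀` determined by
`a^{2−q}·K₀^{q−1} = ρ·(q−1)`. -/
theorem hypercontractivity_implies_qLSI
    {X : Type*} [MetricSpace X] [ProperSpace X] [Nonempty X]
    [MeasurableSpace X] [BorelSpace X]
    (hgeo : ∀ x y : X, ∀ τ : ℝ, 0 ≤ τ → τ ≤ 1 →
      ∃ z : X, dist x z = τ * dist x y ∧ dist z y = (1 - τ) * dist x y)
    (μ : Measure X) [IsProbabilityMeasure μ]
    (hdoub : IsDoublingMeasure μ)
    (s : ℝ) (hs : 1 ≤ s) (hpoin : LocalPoincareIneq μ s)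
    (p q : ℝ) (hq1 : 1 < q) (hq2 : q ≤ 2) (hp : 2 ≤ p) (hpq : 1 / p + 1 / q = 1)
    (a ρ : ℝ) (ha : 0 < a) (hρ : 0 < ρ)
    (hhc : ∀ f : X → ℝ, Measurable f → (∃ M : ℝ, ∀ x, |f x| ≤ M) → ∀ t : ℝ, 0 ≤ t →
      (∫ x, Real.exp ((a + ρ * t) * hopfLaxP p f t x) ∂μ) ^ (1 / (a + ρ * t)) ≤
        (∫ x, Real.exp (a * f x) ∂μ) ^ (1 / a))
    (K₀ : ℝ) (hK₀ : 0 < K₀) (hconst : a ^ (2 - q) * K₀ ^ (q - 1) = ρ * (q - 1)) :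
    QLogSobolev μ q K₀ := by
  rintro f ⟨L, hL⟩
  have hq0 : 0 < q := by linarith
  have hp0 : 0 < p := by linarith
  have hconj : p.HolderConjugate q := by
    rw [Real.holderConjugate_iff]
    exact ⟨by linarith, by simpa [one_div] using hpq⟩
  have hcst : a ^ 2 * ((q / a) ^ q / q) = ρ * ((q - 1) * (q / K₀) ^ (q - 1)) := by
    have h1 : a ^ (2 - q) = a ^ 2 / a ^ q := by
      rw [Real.rpow_sub ha]; norm_num
    rw [h1] at hconst
    rw [Real.div_rpow hq0.le ha.le, Real.div_rpow hq0.le hK₀.le, Real.rpow_sub_one hq0.ne']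
    have h2 : 0 < a ^ q := Real.rpow_pos_of_pos ha q
    have h3 : 0 < K₀ ^ (q - 1) := Real.rpow_pos_of_pos hK₀ _
    generalize K₀ ^ (q - 1) = k at *
    generalize a ^ q = b at *
    generalize q ^ q = c at *
    field_simp at hconst ⊢
    linear_combination c * hconst
  refine untruncate μ hL.continuous.measurable hq1 ?_ fun ε N hε hN => ?_
  · have h1 : 0 ≤ ∫ x, metricSubgradient f x ^ q ∂μ :=
      integral_nonneg fun x => Real.rpow_nonneg (sg_nonneg hL x) q
    have h2 : 0 ≤ q - 1 := by linarith
    positivity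
  · have h := trunc_ineq μ p q hconj a ρ ha hρ hhc hL hε hN
    rw [hcst, mul_assoc] at h
    exact le_of_mul_le_mul_left h hρ
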